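/- Let X be a real linear space, (Y, N) a fuzzy Banach space, (Z, N′) a fuzzy normed space, and φ : X × X → Z with φ(2x, 2y) = α · φ(x, y) for all x, y ∈ X, where 0 < |α| < 2. Let f : X → Y satisfy f(0) = 0 and N (f(x+y) + f(x−y) − 2f(x) − 2f(y)) t ≥ N′ (φ(x, y)) t for all x, y ∈ X and all t > 0. Then there exist unique mappings T, Q : X → Y such that T is additive, Q is quadratic, and N (f(x) − T(x) − Q(x)) t ≥ M x (min {(2 − |α|)/8, (4 − |α|)/32} · t) for all x ∈ X and t > 0, where M x t = min {N′ (φ(x,x)) (t/3), N′ (φ(−x,−x)) (t/3), N′ (φ(x,0)) (t/3), N′ (φ(0,x)) (t/3), N′ (φ(−x,0)) (t/3), N′ (φ(0,−x)) (t/3)}. -/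

import Mathlib

/-!
The direct method of Hyers, in the form of an operator `L g = b⁻¹ • g (2 • ·)`. If a control
function loses only a factor `r < b` of time when the point is doubled, then `L` contracts fuzzy
bounds by `r / b`. Hence the iterates `Lⁿ f` converge as soon as `L f - f` is bounded, and the only
bounded fixed point of `L` is `0`.

For `b = 4` the quadratic defect of `f` at `(x, x)` is `f (2x) - 4 f x`, which gives the quadratic
map `Q = lim Lⁿ f`; the pair `(0, Q)` already satisfies the estimate. The difference of two
decompositions is an additive map plus a quadratic one. Separating parities bounds the additive
part, which vanishes because it is fixed by `L` for `b = 2` and `r < 2`; the quadratic part is then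
bounded and vanishes because it is fixed by `L` for `b = 4`.
-/

open Filter Finset

/-- A fuzzy norm on a real vector space, following Bag–Samanta. -/
structure IsFuzzyNorm {X : Type*} [AddCommGroup X] [Module ℝ X] (N : X → ℝ → ℝ) : Prop where
  nonneg : ∀ (x : X) (t : ℝ), 0 ≤ N x t
  le_one : ∀ (x : X) (t : ℝ), N x t ≤ 1
  eq_zero_of_nonpos : ∀ (x : X) (c : ℝ), c ≤ 0 → N x c = 0
  eq_zero_iff : ∀ x : X, x = 0 ↔ ∀ c : ℝ, 0 < c → N x c = 1
  smul_eq : ∀ (c : ℝ) (x : X) (t : ℝ), c ≠ 0 → N (c • x) t = N x (t / |c|)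
  min_le_add : ∀ (x y : X) (s t : ℝ), min (N x s) (N y t) ≤ N (x + y) (s + t)
  mono : ∀ x : X, Monotone (N x)
  tendsto_one : ∀ x : X, Tendsto (N x) atTop (nhds 1)

/-- Convergence of a sequence to a fuzzy limit in a fuzzy normed space. -/
def FuzzyTendsto {X : Type*} [AddCommGroup X] [Module ℝ X] (N : X → ℝ → ℝ)
    (xs : ℕ → X) (x : X) : Prop :=
  ∀ t : ℝ, 0 < t → Tendsto (fun n => N (xs n - x) t) atTop (nhds 1)

/-- Cauchy sequences in a fuzzy normed space. -/
def FuzzyCauchy {X : Type*} [AddCommGroup X] [Module ℝ X] (N : X → ℝ → ℝ)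
    (xs : ℕ → X) : Prop :=
  ∀ ε : ℝ, 0 < ε → ∀ t : ℝ, 0 < t → ∃ n₀ : ℕ, ∀ n ≥ n₀, ∀ p : ℕ, 0 < p →
    1 - ε < N (xs (n + p) - xs n) t

/-- A fuzzy normed space is complete (a fuzzy Banach space) if every Cauchy
sequence converges. -/
def IsFuzzyComplete {X : Type*} [AddCommGroup X] [Module ℝ X] (N : X → ℝ → ℝ) : Prop :=
  ∀ xs : ℕ → X, FuzzyCauchy N xs → ∃ x : X, FuzzyTendsto N xs x

/-- Quadratic functional equation. -/
def IsQuadratic {X Y : Type*} [AddCommGroup X] [AddCommGroup Y] (Q : X → Y) : Prop :=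
  ∀ x y : X, Q (x + y) + Q (x - y) = 2 • Q x + 2 • Q y

/-- Additive functional equation. -/
def IsAdditive {X Y : Type*} [AddCommGroup X] [AddCommGroup Y] (T : X → Y) : Prop :=
  ∀ x y : X, T (x + y) = T x + T y

/-- The control function `M` of Theorem 3.3. -/
noncomputable def Mctrl {X Z : Type*} [AddCommGroup X] (N' : Z → ℝ → ℝ) (φ : X × X → Z) (x : X) (t : ℝ) : ℝ :=
  min (min (min (N' (φ (x, x)) (t / 3)) (N' (φ (-x, -x)) (t / 3)))
      (min (N' (φ (x, 0)) (t / 3)) (N' (φ (0, x)) (t / 3))))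
    (min (N' (φ (-x, 0)) (t / 3)) (N' (φ (0, -x)) (t / 3)))

namespace IsFuzzyNorm

variable {Y : Type*} [AddCommGroup Y] [Module ℝ Y] {N : Y → ℝ → ℝ}

lemma zero_apply (hN : IsFuzzyNorm N) {t : ℝ} (ht : 0 < t) : N 0 t = 1 :=
  (hN.eq_zero_iff 0).1 rfl t ht

lemma neg_apply (hN : IsFuzzyNorm N) (y : Y) (t : ℝ) : N (-y) t = N y t := by
  simpa using hN.smul_eq (-1) y t (by norm_num)

lemma min_le_sub (hN : IsFuzzyNorm N) (x y : Y) (s t : ℝ) :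
    min (N x s) (N y t) ≤ N (x - y) (s + t) := by
  rw [← hN.neg_apply y, sub_eq_add_neg]
  exact hN.min_le_add x (-y) s t

lemma smul_apply_mul (hN : IsFuzzyNorm N) {c : ℝ} (hc : 0 < c) (y : Y) (t : ℝ) :
    N (c • y) (c * t) = N y t := by
  rw [hN.smul_eq c y _ hc.ne', abs_of_pos hc, mul_div_cancel_left₀ t hc.ne']

lemma le_smul_apply_mul (hN : IsFuzzyNorm N) {a r : ℝ} (hr : 0 < r) (har : |a| ≤ r) (y : Y)
    {t : ℝ} (ht : 0 < t) : N y t ≤ N (a • y) (r * t) := by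
  rcases eq_or_ne a 0 with rfl | ha
  · rw [zero_smul, hN.zero_apply (mul_pos hr ht)]
    exact hN.le_one y t
  · rw [hN.smul_eq a y _ ha]
    refine hN.mono y ?_
    rw [le_div_iff₀ (abs_pos.2 ha), mul_comm]
    exact mul_le_mul_of_nonneg_right har ht.le

lemma eq_zero_of_tendsto (hN : IsFuzzyNorm N) {y : Y} {u : ℝ → ℕ → ℝ}
    (hu : ∀ t, 0 < t → Tendsto (u t) atTop (nhds 1))
    (hle : ∀ t, 0 < t → ∀ n, u t n ≤ N y t) : y = 0 :=
  (hN.eq_zero_iff y).2 fun t ht =>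
    le_antisymm (hN.le_one y t) (le_of_tendsto' (hu t ht) (hle t ht))

end IsFuzzyNorm

namespace FuzzyTendsto

variable {Y : Type*} [AddCommGroup Y] [Module ℝ Y] {N : Y → ℝ → ℝ} {xs ys : ℕ → Y} {x y : Y}

lemma of_le (hN : IsFuzzyNorm N) {u : ℝ → ℕ → ℝ}
    (hu : ∀ t, 0 < t → Tendsto (u t) atTop (nhds 1))
    (hle : ∀ t, 0 < t → ∀ n, u t n ≤ N (xs n - x) t) : FuzzyTendsto N xs x := fun t ht =>
  tendsto_of_tendsto_of_tendsto_of_le_of_le (hu t ht) tendsto_const_nhds (hle t ht)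
    fun _ => hN.le_one _ _

lemma tendsto_min_half (hx : FuzzyTendsto N xs x) (hy : FuzzyTendsto N ys y) {t : ℝ}
    (ht : 0 < t) :
    Tendsto (fun n => min (N (xs n - x) (t / 2)) (N (ys n - y) (t / 2))) atTop (nhds 1) := by
  simpa only [min_self] using (hx _ (half_pos ht)).min (hy _ (half_pos ht))

lemma add (hN : IsFuzzyNorm N) (hx : FuzzyTendsto N xs x) (hy : FuzzyTendsto N ys y) :
    FuzzyTendsto N (fun n => xs n + ys n) (x + y) :=
  of_le hN (fun _ => hx.tendsto_min_half hy) fun t _ n => by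
    simpa only [add_halves, sub_add_sub_comm]
      using hN.min_le_add (xs n - x) (ys n - y) (t / 2) (t / 2)

lemma sub (hN : IsFuzzyNorm N) (hx : FuzzyTendsto N xs x) (hy : FuzzyTendsto N ys y) :
    FuzzyTendsto N (fun n => xs n - ys n) (x - y) :=
  of_le hN (fun _ => hx.tendsto_min_half hy) fun t _ n => by
    simpa only [add_halves, sub_sub_sub_comm]
      using hN.min_le_sub (xs n - x) (ys n - y) (t / 2) (t / 2)

lemma unique (hN : IsFuzzyNorm N) (hx : FuzzyTendsto N xs x) (hy : FuzzyTendsto N xs y) :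
    x = y := by
  refine (sub_eq_zero.1 (hN.eq_zero_of_tendsto (fun _ => hx.tendsto_min_half hy)
    fun t _ n => ?_)).symm
  simpa only [add_halves, sub_sub_sub_cancel_left]
    using hN.min_le_sub (xs n - x) (xs n - y) (t / 2) (t / 2)

-- The time is relaxed from `s` to `t` because `N (y - x)` need not be left-continuous.
lemma le_of_lt (hN : IsFuzzyNorm N) (hx : FuzzyTendsto N xs x) {s t a : ℝ} (hst : s < t)
    (h : ∀ n, a ≤ N (xs n - y) s) : a ≤ N (y - x) t := by
  have ha : a ≤ 1 := (h 0).trans (hN.le_one _ _)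
  have hlim : Tendsto (fun n => min (N (xs n - x) (t - s)) a) atTop (nhds a) := by
    simpa only [min_eq_right ha] using (hx _ (sub_pos.2 hst)).min (tendsto_const_nhds (x := a))
  refine le_of_tendsto' hlim fun n => (min_le_min_left _ (h n)).trans ?_
  simpa only [sub_add_cancel, sub_sub_sub_cancel_left]
    using hN.min_le_sub (xs n - x) (xs n - y) (t - s) s

end FuzzyTendsto

/-- A control function for the direct method: a family of lower bounds for a fuzzy norm which
tend to `1` with time and which survive doubling the point at the cost of multiplying the time
by `r`. -/
structure IsDyadicControl {V : Type*} [AddMonoid V] (ψ : V → ℝ → ℝ) (r : ℝ) : Prop where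
  ratio_pos : 0 < r
  tendsto_one : ∀ v, Tendsto (ψ v) atTop (nhds 1)
  le_double : ∀ v t, 0 < t → ψ v t ≤ ψ (2 • v) (r * t)

lemma IsFuzzyNorm.isDyadicControl {V Z : Type*} [AddMonoid V] [AddCommGroup Z] [Module ℝ Z]
    {N : Z → ℝ → ℝ} (hN : IsFuzzyNorm N) {φ : V → Z} {α r : ℝ}
    (hφ : ∀ v, φ (2 • v) = α • φ v) (hr : 0 < r) (hαr : |α| ≤ r) :
    IsDyadicControl (fun v => N (φ v)) r where
  ratio_pos := hr
  tendsto_one v := hN.tendsto_one (φ v)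
  le_double v t ht := by
    simpa only [hφ] using hN.le_smul_apply_mul hr hαr (φ v) ht

namespace IsDyadicControl

variable {V W : Type*} [AddMonoid V] [AddMonoid W] {ψ χ : V → ℝ → ℝ} {r : ℝ}

lemma comp_hom (hψ : IsDyadicControl ψ r) (h : W →+ V) :
    IsDyadicControl (fun w => ψ (h w)) r where
  ratio_pos := hψ.ratio_pos
  tendsto_one w := hψ.tendsto_one (h w)
  le_double w t ht := by simpa only [map_nsmul] using hψ.le_double (h w) t ht

lemma comp_const_mul (hψ : IsDyadicControl ψ r) {c : ℝ} (hc : 0 < c) :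
    IsDyadicControl (fun v t => ψ v (c * t)) r where
  ratio_pos := hψ.ratio_pos
  tendsto_one v := (hψ.tendsto_one v).comp (tendsto_id.const_mul_atTop hc)
  le_double v t ht := by
    simpa only [mul_left_comm r] using hψ.le_double v (c * t) (mul_pos hc ht)

protected lemma min (hψ : IsDyadicControl ψ r) (hχ : IsDyadicControl χ r) :
    IsDyadicControl (fun v t => min (ψ v t) (χ v t)) r where
  ratio_pos := hψ.ratio_pos
  tendsto_one v := by simpa only [min_self] using (hψ.tendsto_one v).min (hχ.tendsto_one v)
  le_double v t ht := min_le_min (hψ.le_double v t ht) (hχ.le_double v t ht)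

lemma tendsto_pow_mul (hψ : IsDyadicControl ψ r) {b : ℝ} (hrb : r < b) {t : ℝ} (ht : 0 < t)
    (v : V) : Tendsto (fun n : ℕ => ψ v ((b / r) ^ n * t)) atTop (nhds 1) :=
  (hψ.tendsto_one v).comp <| (tendsto_pow_atTop_atTop_of_one_lt
    ((one_lt_div hψ.ratio_pos).2 hrb)).atTop_mul_const ht

lemma mctrl {X Z : Type*} [AddCommGroup X] {N' : Z → ℝ → ℝ} {φ : X × X → Z}
    (h : IsDyadicControl (fun p => N' (φ p)) r) : IsDyadicControl (Mctrl N' φ) r := by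
  have third : IsDyadicControl (fun p t => N' (φ p) (t / 3)) r := by
    simpa only [div_eq_inv_mul] using h.comp_const_mul (c := 3⁻¹) (by norm_num)
  have diag := third.comp_hom ((AddMonoidHom.id X).prod (AddMonoidHom.id X))
  have left := third.comp_hom (AddMonoidHom.inl X X)
  have right := third.comp_hom (AddMonoidHom.inr X X)
  have neg {χ : X → ℝ → ℝ} (hχ : IsDyadicControl χ r) : IsDyadicControl (fun v => χ (-v)) r :=
    hχ.comp_hom (-AddMonoidHom.id X)
  exact ((diag.min (neg diag)).min (left.min right)).min ((neg left).min (neg right))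

end IsDyadicControl

/-- The fuzzy analogue of a norm bound on the map `g`: at all positive times the fuzzy norm `N` of
its values is at least `ψ`. -/
def FuzzyBoundedBy {V Y : Type*} (N : Y → ℝ → ℝ) (ψ : V → ℝ → ℝ) (g : V → Y) : Prop :=
  ∀ v t, 0 < t → ψ v t ≤ N (g v) t

/-- The operator `g ↦ b⁻¹ • g (2 • ·)` of the direct method of Hyers. For `b ≠ 0` its fixed
points are the maps with `g (2 • v) = b • g v`. -/
noncomputable def hyersOp {V Y : Type*} [AddMonoid V] [AddCommGroup Y] [Module ℝ Y] (b : ℝ) :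
    Module.End ℝ (V → Y) :=
  b⁻¹ • LinearMap.funLeft ℝ Y (fun v : V => 2 • v)

section DirectMethod

variable {V Y : Type*} [AddMonoid V] [AddCommGroup Y] [Module ℝ Y] {N : Y → ℝ → ℝ}
  {ψ : V → ℝ → ℝ} {b r : ℝ} {f g : V → Y}

lemma hyersOp_apply (b : ℝ) (g : V → Y) (v : V) : hyersOp b g v = b⁻¹ • g (2 • v) := rfl

lemma hyersOp_eq_self (hb : b ≠ 0) (hg : ∀ v, g (2 • v) = b • g v) : hyersOp b g = g := by
  ext v
  rw [hyersOp_apply, hg, inv_smul_smul₀ hb]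

lemma FuzzyBoundedBy.map_hyersOp (hN : IsFuzzyNorm N) (hψ : IsDyadicControl ψ r) (hb : 0 < b)
    (h : FuzzyBoundedBy N ψ g) : FuzzyBoundedBy N (fun v t => ψ v (b / r * t)) (hyersOp b g) := by
  intro v t ht
  have hr := hψ.ratio_pos
  calc ψ v (b / r * t)
      ≤ ψ (2 • v) (r * (b / r * t)) := hψ.le_double v _ (by positivity)
    _ = ψ (2 • v) (b * t) := by rw [← mul_assoc, mul_div_cancel₀ b hr.ne']
    _ ≤ N (g (2 • v)) (b * t) := h _ _ (by positivity)
    _ = N (hyersOp b g v) t := by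
      rw [hyersOp_apply, ← hN.smul_apply_mul hb (b⁻¹ • _), smul_inv_smul₀ hb.ne']

lemma FuzzyBoundedBy.map_hyersOp_pow (hN : IsFuzzyNorm N) (hψ : IsDyadicControl ψ r) (hb : 0 < b)
    (h : FuzzyBoundedBy N ψ g) (n : ℕ) :
    FuzzyBoundedBy N (fun v t => ψ v ((b / r) ^ n * t)) ((hyersOp b ^ n) g) := by
  induction n with
  | zero => simpa using h
  | succ n ih =>
    have hq : 0 < (b / r) ^ n := pow_pos (div_pos hb hψ.ratio_pos) n
    simpa only [pow_succ' (hyersOp b), Module.End.mul_apply, pow_succ, mul_assoc]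
      using ih.map_hyersOp hN (hψ.comp_const_mul hq) hb

lemma FuzzyBoundedBy.eq_zero (hN : IsFuzzyNorm N) (hψ : IsDyadicControl ψ r) (hrb : r < b)
    (hg : ∀ v, g (2 • v) = b • g v) (h : FuzzyBoundedBy N ψ g) : g = 0 := by
  have hb : 0 < b := hψ.ratio_pos.trans hrb
  have hfix (n : ℕ) : (hyersOp b ^ n) g = g := by
    rw [Module.End.pow_apply]
    exact Function.iterate_fixed (hyersOp_eq_self hb.ne' hg) n
  ext v
  refine hN.eq_zero_of_tendsto (fun t ht => hψ.tendsto_pow_mul hrb ht v) fun t ht n => ?_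
  simpa only [hfix] using h.map_hyersOp_pow hN hψ hb n v t ht

lemma FuzzyBoundedBy.hyersOp_sub_self (hN : IsFuzzyNorm N) (hb : 0 < b)
    (h : FuzzyBoundedBy N ψ (fun v => f (2 • v) - b • f v)) :
    FuzzyBoundedBy N (fun v t => ψ v (b * t)) (hyersOp b f - f) := by
  intro v t ht
  have hq : b • (hyersOp b f - f) v = f (2 • v) - b • f v := by
    rw [Pi.sub_apply, hyersOp_apply, smul_sub, smul_inv_smul₀ hb.ne']
  rw [← hN.smul_apply_mul hb, hq]
  exact h v (b * t) (by positivity)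

/- The errors of the successive steps form a geometric series of ratio `r / b`; the time `t` is
split as `r / b * t + (1 - r / b) * t` between its tail and its first term. -/
lemma FuzzyBoundedBy.hyersOp_pow_sub_self (hN : IsFuzzyNorm N) (hψ : IsDyadicControl ψ r)
    (hrb : r < b) (h : FuzzyBoundedBy N ψ (fun v => f (2 • v) - b • f v)) (n : ℕ) :
    FuzzyBoundedBy N (fun v t => ψ v ((b - r) * t)) ((hyersOp b ^ n) f - f) := by
  have hr := hψ.ratio_pos
  have hb : 0 < b := hr.trans hrb
  have hbr : 0 < b - r := sub_pos.2 hrb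
  induction n with
  | zero =>
    intro v t ht
    rw [pow_zero, Module.End.one_apply, sub_self, Pi.zero_apply, hN.zero_apply ht]
    exact (h v _ (by positivity)).trans (hN.le_one _ _)
  | succ n ih =>
    intro v t ht
    have tail : ψ v ((b - r) * t) ≤ N (hyersOp b ((hyersOp b ^ n) f - f) v) (r / b * t) := by
      have htime : (b - r) * (b / r * (r / b * t)) = (b - r) * t := by field_simp
      simpa only [htime] using
        ih.map_hyersOp hN (hψ.comp_const_mul hbr) hb v (r / b * t) (by positivity)
    have first : ψ v ((b - r) * t) ≤ N ((hyersOp b f - f) v) ((1 - r / b) * t) := by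
      have htime : b * ((1 - r / b) * t) = (b - r) * t := by field_simp
      simpa only [htime] using
        h.hyersOp_sub_self hN hb v ((1 - r / b) * t)
          (mul_pos (sub_pos.2 ((div_lt_one hb).2 hrb)) ht)
    have hsplit : ((hyersOp b ^ (n + 1)) f - f) v =
        hyersOp b ((hyersOp b ^ n) f - f) v + (hyersOp b f - f) v := by
      rw [← Pi.add_apply, pow_succ', Module.End.mul_apply, map_sub, sub_add_sub_cancel]
    have htime : r / b * t + (1 - r / b) * t = t := by ring
    simpa only [hsplit, htime] using (le_min tail first).trans (hN.min_le_add _ _ _ _)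

lemma FuzzyBoundedBy.fuzzyCauchy_hyersOp_pow (hN : IsFuzzyNorm N) (hψ : IsDyadicControl ψ r)
    (hrb : r < b) (h : FuzzyBoundedBy N ψ (fun v => f (2 • v) - b • f v)) (v : V) :
    FuzzyCauchy N (fun n => (hyersOp b ^ n) f v) := by
  intro ε hε t ht
  have hψ' := hψ.comp_const_mul (sub_pos.2 hrb)
  obtain ⟨n₀, hn₀⟩ := eventually_atTop.1 <|
    (hψ'.tendsto_pow_mul hrb ht v).eventually_const_lt (sub_lt_self 1 hε)
  refine ⟨n₀, fun n hn p _ => (hn₀ n hn).trans_le ?_⟩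
  have hbound := (h.hyersOp_pow_sub_self hN hψ hrb p).map_hyersOp_pow hN hψ'
    (hψ.ratio_pos.trans hrb) n
  simpa only [map_sub, Pi.sub_apply, ← Module.End.mul_apply, ← pow_add] using hbound v t ht

end DirectMethod

section FunctionalEquations

variable {X Y : Type*} [AddCommGroup X] [AddCommGroup Y]

/-- The defect of `f` in the quadratic functional equation, as a map on pairs. -/
def quadDefect (f : X → Y) (p : X × X) : Y :=
  f (p.1 + p.2) + f (p.1 - p.2) - 2 • f p.1 - 2 • f p.2

lemma isQuadratic_iff_quadDefect_eq_zero {Q : X → Y} :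
    IsQuadratic Q ↔ ∀ p, quadDefect Q p = 0 := by
  simp only [IsQuadratic, quadDefect, Prod.forall, sub_sub, sub_eq_zero]

lemma quadDefect_diag {f : X → Y} (hf : f 0 = 0) (x : X) :
    quadDefect f (x, x) = f (2 • x) - 4 • f x := by
  simp only [quadDefect, sub_self, hf, two_nsmul x]
  abel

lemma IsAdditive.map_two_nsmul {T : X → Y} (hT : IsAdditive T) (x : X) :
    T (2 • x) = 2 • T x := by
  rw [two_nsmul, hT, two_nsmul]

lemma IsAdditive.map_neg {T : X → Y} (hT : IsAdditive T) (x : X) : T (-x) = -T x :=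
  _root_.map_neg (AddMonoidHom.mk' T hT) x

lemma IsAdditive.sub {T T' : X → Y} (hT : IsAdditive T) (hT' : IsAdditive T') :
    IsAdditive (T - T') := fun x y => by
  simp only [Pi.sub_apply, hT x y, hT' x y]
  abel

lemma IsQuadratic.sub {Q Q' : X → Y} (hQ : IsQuadratic Q) (hQ' : IsQuadratic Q') :
    IsQuadratic (Q - Q') := fun x y => by
  simp only [Pi.sub_apply, sub_add_sub_comm, hQ x y, hQ' x y]
  abel

lemma IsQuadratic.map_zero [IsAddTorsionFree Y] {Q : X → Y} (hQ : IsQuadratic Q) : Q 0 = 0 := by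
  have h := hQ 0 0
  rw [add_zero, sub_zero, ← two_nsmul, left_eq_add] at h
  exact (nsmul_eq_zero_iff_right two_ne_zero).1 h

lemma IsQuadratic.map_neg [IsAddTorsionFree Y] {Q : X → Y} (hQ : IsQuadratic Q) (x : X) :
    Q (-x) = Q x := by
  have h := hQ 0 x
  rw [hQ.map_zero, zero_add, zero_sub, smul_zero, zero_add, two_nsmul] at h
  exact add_left_cancel h

lemma IsQuadratic.map_two_nsmul [IsAddTorsionFree Y] {Q : X → Y} (hQ : IsQuadratic Q) (x : X) :
    Q (2 • x) = 4 • Q x :=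
  sub_eq_zero.1 <| (quadDefect_diag hQ.map_zero x).symm.trans <|
    isQuadratic_iff_quadDefect_eq_zero.1 hQ (x, x)

end FunctionalEquations

section Stability

variable {X Y : Type*} [AddCommGroup X] [AddCommGroup Y] [Module ℝ Y] {N : Y → ℝ → ℝ} {r : ℝ}

lemma quadDefect_hyersOp_pow (b : ℝ) (f : X → Y) (n : ℕ) :
    quadDefect ((hyersOp b ^ n) f) = (hyersOp b ^ n) (quadDefect f) := by
  induction n with
  | zero => rfl
  | succ n ih =>
    rw [pow_succ', pow_succ', Module.End.mul_apply, Module.End.mul_apply, ← ih]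
    ext p
    simp only [quadDefect, hyersOp_apply, Prod.smul_fst, Prod.smul_snd, smul_add, smul_sub,
      smul_comm b⁻¹ 2]

lemma FuzzyTendsto.quadDefect (hN : IsFuzzyNorm N) {F : ℕ → X → Y} {Q : X → Y}
    (hF : ∀ x, FuzzyTendsto N (fun n => F n x) (Q x)) (p : X × X) :
    FuzzyTendsto N (fun n => quadDefect (F n) p) (quadDefect Q p) := by
  have double (x : X) : FuzzyTendsto N (fun n => 2 • F n x) (2 • Q x) := by
    simpa only [two_nsmul] using (hF x).add hN (hF x)
  exact (((hF _).add hN (hF _)).sub hN (double _)).sub hN (double _)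

lemma isQuadratic_of_fuzzyTendsto (hN : IsFuzzyNorm N) {ψ : X × X → ℝ → ℝ}
    (hψ : IsDyadicControl ψ r) {b : ℝ} (hrb : r < b) {f Q : X → Y}
    (hf : FuzzyBoundedBy N ψ (quadDefect f))
    (hQ : ∀ x, FuzzyTendsto N (fun n => (hyersOp b ^ n) f x) (Q x)) : IsQuadratic Q := by
  refine isQuadratic_iff_quadDefect_eq_zero.2 fun p =>
    (FuzzyTendsto.quadDefect hN hQ p).unique hN ?_
  refine .of_le hN (fun t ht => hψ.tendsto_pow_mul hrb ht p) fun t ht n => ?_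
  simpa only [quadDefect_hyersOp_pow, sub_zero]
    using hf.map_hyersOp_pow hN hψ (hψ.ratio_pos.trans hrb) n p t ht

theorem exists_isQuadratic_fuzzyBoundedBy (hN : IsFuzzyNorm N) (hcomplete : IsFuzzyComplete N)
    {ψ : X × X → ℝ → ℝ} (hψ : IsDyadicControl ψ r) {k : ℝ} (hk : 0 < k) (hkr : k < 4 - r)
    {f : X → Y} (hf0 : f 0 = 0) (hf : FuzzyBoundedBy N ψ (quadDefect f)) :
    ∃ Q : X → Y, IsQuadratic Q ∧ FuzzyBoundedBy N (fun x t => ψ (x, x) (k * t)) (f - Q) := by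
  have hr4 : 0 < 4 - r := hk.trans hkr
  have hψ' : IsDyadicControl (fun x => ψ (x, x)) r :=
    hψ.comp_hom ((AddMonoidHom.id X).prod (AddMonoidHom.id X))
  have hdiag : FuzzyBoundedBy N (fun x => ψ (x, x)) (fun x => f (2 • x) - (4 : ℝ) • f x) := by
    intro x t ht
    simpa only [quadDefect_diag hf0, ofNat_smul_eq_nsmul] using hf (x, x) t ht
  choose Q hQ using fun x =>
    hcomplete _ (hdiag.fuzzyCauchy_hyersOp_pow hN hψ' (sub_pos.1 hr4) x)
  refine ⟨Q, isQuadratic_of_fuzzyTendsto hN hψ (sub_pos.1 hr4) hf hQ, fun x t ht => ?_⟩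
  have hlt : k * t / (4 - r) < t := by
    rw [div_lt_iff₀ hr4, mul_comm t]
    exact mul_lt_mul_of_pos_right hkr ht
  refine (hQ x).le_of_lt hN hlt fun n => ?_
  simpa only [mul_div_cancel₀ _ hr4.ne', Pi.sub_apply]
    using hdiag.hyersOp_pow_sub_self hN hψ' (sub_pos.1 hr4) n x (k * t / (4 - r)) (by positivity)

/- The even part cancels in `(T + R) x - (T + R) (-x) = 2 • T x`, so `T` is controlled on its own
and vanishes since `r < 2`; then `R` is controlled and vanishes since `r < 4`. -/
lemma FuzzyBoundedBy.eq_zero_of_add (hN : IsFuzzyNorm N) {ψ : X → ℝ → ℝ}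
    (hψ : IsDyadicControl ψ r) (hr : r < 2) {T R : X → Y} (hT : IsAdditive T)
    (hR : IsQuadratic R) (h : FuzzyBoundedBy N ψ (T + R)) : T = 0 ∧ R = 0 := by
  have : IsAddTorsionFree Y := .of_isTorsionFree ℝ Y
  have hTbound : FuzzyBoundedBy N (fun x t => min (ψ x t) (ψ (-x) t)) T := by
    intro x t ht
    have hodd : (T + R) x - (T + R) (-x) = (2 : ℝ) • T x := by
      simp only [Pi.add_apply, hT.map_neg, hR.map_neg]
      module
    calc min (ψ x t) (ψ (-x) t)
        ≤ min (N ((T + R) x) t) (N ((T + R) (-x)) t) := min_le_min (h x t ht) (h (-x) t ht)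
      _ ≤ N ((2 : ℝ) • T x) (2 * t) := by
        rw [← hodd, two_mul]
        exact hN.min_le_sub _ _ _ _
      _ = N (T x) t := hN.smul_apply_mul two_pos _ _
  have hT0 : T = 0 :=
    hTbound.eq_zero hN (hψ.min (hψ.comp_hom (-AddMonoidHom.id X))) hr fun x => by
      rw [hT.map_two_nsmul, ofNat_smul_eq_nsmul ℝ]
  rw [hT0, zero_add] at h
  refine ⟨hT0, h.eq_zero hN hψ (hr.trans (by norm_num : (2 : ℝ) < 4)) fun x => ?_⟩
  rw [hR.map_two_nsmul, ofNat_smul_eq_nsmul ℝ]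

theorem eq_of_fuzzyBoundedBy_sub_sub (hN : IsFuzzyNorm N) {ψ : X → ℝ → ℝ}
    (hψ : IsDyadicControl ψ r) (hr : r < 2) {f T T' Q Q' : X → Y}
    (hT : IsAdditive T) (hQ : IsQuadratic Q) (h : FuzzyBoundedBy N ψ (f - T - Q))
    (hT' : IsAdditive T') (hQ' : IsQuadratic Q') (h' : FuzzyBoundedBy N ψ (f - T' - Q')) :
    T' = T ∧ Q' = Q := by
  have hdiff : FuzzyBoundedBy N (fun x t => ψ x (2⁻¹ * t)) ((T' - T) + (Q' - Q)) := by
    intro x t ht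
    have hsub : ((T' - T) + (Q' - Q)) x = (f - T - Q) x - (f - T' - Q') x := by
      simp only [Pi.add_apply, Pi.sub_apply]
      abel
    have hhalf : 0 < 2⁻¹ * t := by positivity
    have htime : 2⁻¹ * t + 2⁻¹ * t = t := by ring
    simpa only [← hsub, htime]
      using (le_min (h x _ hhalf) (h' x _ hhalf)).trans (hN.min_le_sub _ _ _ _)
  obtain ⟨hT0, hQ0⟩ :=
    hdiff.eq_zero_of_add hN (hψ.comp_const_mul (by norm_num)) hr (hT'.sub hT) (hQ'.sub hQ)
  exact ⟨sub_eq_zero.1 hT0, sub_eq_zero.1 hQ0⟩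

end Stability

lemma isAdditive_zero {X Y : Type*} [AddCommGroup X] [AddCommGroup Y] :
    IsAdditive (0 : X → Y) := fun _ _ => (add_zero 0).symm

lemma Mctrl_le_diag {X Z : Type*} [AddCommGroup X] (N' : Z → ℝ → ℝ) (φ : X × X → Z) (x : X)
    (t : ℝ) : Mctrl N' φ x t ≤ N' (φ (x, x)) (t / 3) :=
  (min_le_left _ _).trans ((min_le_left _ _).trans (min_le_left _ _))

theorem fuzzy_general_stability_general
    {X Y Z : Type*} [AddCommGroup X]
    [AddCommGroup Y] [Module ℝ Y] [AddCommGroup Z] [Module ℝ Z]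
    {N : Y → ℝ → ℝ} {N' : Z → ℝ → ℝ}
    (hN : IsFuzzyNorm N) (hYcomplete : IsFuzzyComplete N) (hN' : IsFuzzyNorm N')
    {α : ℝ} (hα2 : |α| < 2) {φ : X × X → Z} (hφ : ∀ p, φ (2 • p) = α • φ p)
    {f : X → Y} (hf0 : f 0 = 0) (hf : FuzzyBoundedBy N (fun p => N' (φ p)) (quadDefect f))
    {c : ℝ} (hc0 : 0 < c) (hc : c < 3 * (4 - |α|)) :
    ∃ Q : X → Y, (IsQuadratic Q ∧ FuzzyBoundedBy N (fun x t => Mctrl N' φ x (c * t)) (f - Q)) ∧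
      ∀ T' Q' : X → Y, IsAdditive T' → IsQuadratic Q' →
        FuzzyBoundedBy N (fun x t => Mctrl N' φ x (c * t)) (f - T' - Q') → T' = 0 ∧ Q' = Q := by
  obtain ⟨r, hαr, hr⟩ : ∃ r, |α| < r ∧ r < min 2 (4 - c / 3) :=
    exists_between (lt_min hα2 (by linarith))
  obtain ⟨hr2, hrc⟩ := lt_min_iff.1 hr
  have hψ := hN'.isDyadicControl hφ ((abs_nonneg α).trans_lt hαr) hαr.le
  obtain ⟨Q, hQ, hdiag⟩ := exists_isQuadratic_fuzzyBoundedBy hN hYcomplete hψ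
    (show 0 < c / 3 by positivity) (by linarith) hf0 hf
  have hbound : FuzzyBoundedBy N (fun x t => Mctrl N' φ x (c * t)) (f - Q) := fun x t ht =>
    (Mctrl_le_diag N' φ x (c * t)).trans (by simpa only [div_mul_eq_mul_div] using hdiag x t ht)
  refine ⟨Q, ⟨hQ, hbound⟩, fun T' Q' hT' hQ' h' => ?_⟩
  exact eq_of_fuzzyBoundedBy_sub_sub hN (hψ.mctrl.comp_const_mul hc0) hr2 isAdditive_zero hQ
    (by simpa only [sub_zero] using hbound) hT' hQ' h'

/-- Theorem 3.3: general fuzzy stability of the quadratic functional equation;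
`f` decomposes, up to a fuzzy error controlled by `M`, into a unique additive
part `T` and a unique quadratic part `Q`. -/
theorem fuzzy_general_stability
    {X Y Z : Type*} [AddCommGroup X] [Module ℝ X]
    [AddCommGroup Y] [Module ℝ Y] [AddCommGroup Z] [Module ℝ Z]
    (N : Y → ℝ → ℝ) (N' : Z → ℝ → ℝ)
    (hN : IsFuzzyNorm N) (hYcomplete : IsFuzzyComplete N) (hN' : IsFuzzyNorm N')
    (α : ℝ) (hα0 : 0 < |α|) (hα2 : |α| < 2)
    (φ : X × X → Z)
    (hφ : ∀ x y : X, φ (2 • x, 2 • y) = α • φ (x, y))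
    (f : X → Y) (hf0 : f 0 = 0)
    (hineq : ∀ x y : X, ∀ t : ℝ, 0 < t →
      N' (φ (x, y)) t ≤ N (f (x + y) + f (x - y) - 2 • f x - 2 • f y) t) :
    ∃ T Q : X → Y,
      (IsAdditive T ∧ IsQuadratic Q ∧
        (∀ x : X, ∀ t : ℝ, 0 < t →
          Mctrl N' φ x (min ((2 - |α|) / 8) ((4 - |α|) / 32) * t) ≤ N (f x - T x - Q x) t)) ∧
      ∀ T' Q' : X → Y,
        (IsAdditive T' ∧ IsQuadratic Q' ∧
          (∀ x : X, ∀ t : ℝ, 0 < t →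
            Mctrl N' φ x (min ((2 - |α|) / 8) ((4 - |α|) / 32) * t) ≤ N (f x - T' x - Q' x) t)) →
        T' = T ∧ Q' = Q := by
  obtain ⟨Q, ⟨hQ, hbound⟩, huniq⟩ := fuzzy_general_stability_general hN hYcomplete hN' hα2
    (fun p => hφ p.1 p.2) hf0 (fun p => hineq p.1 p.2)
    (lt_min (by linarith) (by linarith) : 0 < min ((2 - |α|) / 8) ((4 - |α|) / 32))
    ((min_le_right _ _).trans_lt (by linarith))
  rw [← sub_zero f] at hbound
  exact ⟨0, Q, ⟨isAdditive_zero, hQ, hbound⟩, fun T' Q' ⟨hT', hQ', h'⟩ => huniq T' Q' hT' hQ' h'⟩
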